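/- arXiv:2605.09332 — 7 statements merged into one kernel-verified Lean document; each statement's English description precedes it below -/
import Mathlib

section
/- Every second-price pacing game (with n ≥ 1 buyers, m goods, nonnegative valuations, and strictly positive budgets) admits at least one second-price pacing equilibrium. -/
/-!
The proof smooths the tie-breaking rule, solves the smoothed game by a Brouwer-type argument,
and lets the smoothing parameter tend to zero.

*Smoothing.* For `ε > 0` split good `j` in proportion to `max 0 (α i * v i j - h j + ε)`, so that
only buyers within `ε` of the highest bid get a share. Spending `s i α = ∑ j, x i j * p j` is then
continuous in `α`. A buyer with `α i = 0` receives only goods whose price is at most `ε`, so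
spends at most `m * ε ≤ B i`.

*Complementarity.* Given continuous `s i` with `s i α ≤ B i` whenever `α i = 0`, there is `α` in
the cube with `s i α ≤ B i`, and `α i = 1` unless equality holds (`exists_complementary`). This
follows from a discrete Poincaré–Miranda theorem (`exists_cell`) by refining the grid: label a
grid point `1` in coordinate `i` when `α i = 1` or `s i α > B i`, and `0` otherwise.

*Discrete Poincaré–Miranda.* View the 0-1 labellings `l i` as 0-cochains mod 2 on the grid. The
cup product `δl₁ ∪ ⋯ ∪ δlₙ` (`cup`) is a cochain on unit cubes, and it vanishes on a cube where
some `l i` is constant. Being closed (`cup_closed`), it is the coboundary of `l₁ δl₂ ∪ ⋯ ∪ δlₙ`,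
so its sum over the box is a boundary sum. There only the faces orthogonal to the first direction
matter, since `δl j = 0` on faces orthogonal to direction `j`; induction on the dimension shows
that the sum is `1` (`boxSum_cup`). Hence some cube carries both labels in every coordinate.

*Limit.* All equilibrium conditions pass to a convergent subsequence as `ε → 0`.
-/

/-! ### Second-price pacing equilibria -/

/-- The highest paced bid on good `j`. -/
noncomputable def hBid {n : ℕ} [NeZero n] {G : Type*} (v : Fin n → G → ℝ)
    (α : Fin n → ℝ) (j : G) : ℝ :=
  Finset.univ.sup' Finset.univ_nonempty (fun i => α i * v i j)

/-- The second-highest paced bid on good `j`: the largest element of the list of paced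
bids after removing one occurrence of its maximum (and `0` when nothing remains). -/
noncomputable def pBid {n : ℕ} [NeZero n] {G : Type*} (v : Fin n → G → ℝ)
    (α : Fin n → ℝ) (j : G) : ℝ :=
  ((List.ofFn (fun i : Fin n => α i * v i j)).erase (hBid v α j)).foldr max 0

/-- `(α, x)` is a second-price pacing equilibrium for valuations `v` and budgets `B`:
`α ∈ [0,1]ⁿ`, `x ∈ [0,1]^{n×m}` with column sums at most one, and conditions (a)–(d). -/
def IsSPPE {n : ℕ} [NeZero n] {G : Type*} [Fintype G] (v : Fin n → G → ℝ)
    (B : Fin n → ℝ) (α : Fin n → ℝ) (x : Fin n → G → ℝ) : Prop :=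
  (∀ i, α i ∈ Set.Icc (0:ℝ) 1) ∧
  (∀ i j, x i j ∈ Set.Icc (0:ℝ) 1) ∧
  (∀ j, ∑ i, x i j ≤ 1) ∧
  (∀ i j, 0 < x i j → α i * v i j = hBid v α j) ∧
  (∀ j, 0 < hBid v α j → ∑ i, x i j = 1) ∧
  (∀ i, ∑ j, x i j * pBid v α j ≤ B i) ∧
  (∀ i, ∑ j, x i j * pBid v α j < B i → α i = 1)

/-! ### Cup products of labellings on grid cubes -/

/-- The grid point `a` moved one step in direction `j`. -/
def stepTo {n : ℕ} (a : Fin n → ℕ) (j : Fin n) : Fin n → ℕ := Function.update a j (a j + 1)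

theorem stepTo_comm {n : ℕ} (a : Fin n → ℕ) (i j : Fin n) :
    stepTo (stepTo a i) j = stepTo (stepTo a j) i := by
  by_cases h : i = j
  · subst h; rfl
  · funext k
    simp only [stepTo, Function.update_apply]
    split_ifs <;> simp_all

/-- The mod 2 cup product `δl₁ ∪ ⋯ ∪ δlₖ` of the coboundaries of the labellings in the list,
evaluated on the unit cube with lowest vertex `a` and set of edge directions `A`. It sums over
monotone edge paths from `a`, using each direction at most once, the product of the increments of
`lᵢ` along the `i`-th step. It is meaningful as a cup product for `A.card = k`, but the identities
below hold without this restriction. -/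
def cup {n : ℕ} :
    List ((Fin n → ℕ) → ZMod 2) → Finset (Fin n) → (Fin n → ℕ) → ZMod 2
  | [], _, _ => 1
  | l :: L, A, a => ∑ j ∈ A, (l (stepTo a j) - l a) * cup L (A.erase j) (stepTo a j)

/-- A symmetric function summed over ordered pairs of distinct elements is zero mod 2. -/
theorem sum_pairs_zero {ι : Type*} [DecidableEq ι] (A : Finset ι) (f : ι → ι → ZMod 2)
    (hf : ∀ i j, f i j = f j i) : ∑ j ∈ A, ∑ i ∈ A.erase j, f j i = 0 := by
  rw [Finset.sum_sigma']
  refine Finset.sum_involution (fun p _ => ⟨p.2, p.1⟩) ?_ ?_ ?_ ?_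
  · rintro ⟨a, b⟩ _
    simp only [hf b a]
    exact CharTwo.add_self_eq_zero _
  · rintro ⟨a, b⟩ h _ he
    simp at h he
    exact h.2.1 he.1
  · rintro ⟨a, b⟩ h
    simp at h ⊢
    exact ⟨h.2.2, fun e => h.2.1 e.symm, h.1⟩
  · rintro ⟨a, b⟩ _
    rfl

/-- The cup product of coboundaries is a closed cochain: its values on the upper and on the lower
faces of a cube have the same sum. -/
theorem cup_closed {n : ℕ} (L : List ((Fin n → ℕ) → ZMod 2)) :
    ∀ (A : Finset (Fin n)) (a : Fin n → ℕ),
      ∑ j ∈ A, cup L (A.erase j) (stepTo a j) = ∑ j ∈ A, cup L (A.erase j) a := by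
  induction L with
  | nil => intro A a; simp [cup]
  | cons l L ih =>
    intro A a
    simp only [cup, sub_mul, Finset.sum_sub_distrib, ← Finset.mul_sum]
    have h1 : ∑ j ∈ A, ∑ i ∈ A.erase j, l (stepTo (stepTo a j) i) *
        cup L ((A.erase j).erase i) (stepTo (stepTo a j) i) = 0 :=
      sum_pairs_zero A (fun j i => l (stepTo (stepTo a j) i) *
        cup L ((A.erase j).erase i) (stepTo (stepTo a j) i))
        (fun i j => by simp only [stepTo_comm a i j, Finset.erase_right_comm])
    have h2 : ∑ j ∈ A, ∑ i ∈ A.erase j, cup L ((A.erase j).erase i) (stepTo a i) = 0 := by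
      rw [Finset.sum_congr rfl (fun j _ => ih (A.erase j) a)]
      exact sum_pairs_zero A (fun j i => cup L ((A.erase j).erase i) a)
        (fun i j => by simp only [Finset.erase_right_comm])
    have h3 : ∑ j ∈ A, ∑ i ∈ A.erase j, l (stepTo a i) * cup L ((A.erase j).erase i) (stepTo a i)
        = ∑ j ∈ A, l (stepTo a j) * ∑ i ∈ A.erase j,
            cup L ((A.erase j).erase i) (stepTo (stepTo a j) i) := by
      simp only [ih, Finset.mul_sum]
      rw [Finset.sum_comm' (t' := A) (s' := fun i => A.erase i)]
      · simp only [Finset.erase_right_comm]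
      · intro x y; simp only [Finset.mem_erase]; tauto
    rw [h1, h2, h3, mul_zero, sub_zero, zero_sub]
    exact CharTwo.neg_eq _

/-- `δl ∪ δL = δ(l · δL)` on each cube. -/
theorem cup_cons_eq {n : ℕ} (l : (Fin n → ℕ) → ZMod 2) (L : List ((Fin n → ℕ) → ZMod 2))
    (A : Finset (Fin n)) (a : Fin n → ℕ) :
    cup (l :: L) A a =
      ∑ j ∈ A, (l (stepTo a j) * cup L (A.erase j) (stepTo a j) - l a * cup L (A.erase j) a) := by
  simp only [cup, sub_mul, Finset.sum_sub_distrib, ← Finset.mul_sum, cup_closed]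

/-- The cup product vanishes on a cube inside a hyperplane `x j = t` on which one of the
labellings is constant. -/
theorem cup_eq_zero {n : ℕ} (L : List ((Fin n → ℕ) → ZMod 2)) (j : Fin n) (t : ℕ) (u : ZMod 2) :
    ∀ (A : Finset (Fin n)) (a : Fin n → ℕ), j ∉ A → a j = t →
      (∃ l ∈ L, ∀ x : Fin n → ℕ, x j = t → l x = u) → cup L A a = 0 := by
  induction L with
  | nil => simp
  | cons l L ih =>
    rintro A a hj ha ⟨l', hl', hc⟩
    refine Finset.sum_eq_zero fun i hi => ?_
    have hs : stepTo a i j = t := by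
      rw [stepTo, Function.update_of_ne, ha]
      rintro rfl; exact hj hi
    rcases List.mem_cons.1 hl' with rfl | h
    · rw [hc _ hs, hc _ ha, sub_self, zero_mul]
    · rw [ih (A.erase i) (stepTo a i) (fun h => hj (Finset.mem_of_mem_erase h)) hs ⟨l', h, hc⟩,
        mul_zero]

theorem stepTo_le {n : ℕ} (a : Fin n → ℕ) (j : Fin n) : a ≤ stepTo a j := by
  intro k
  simp only [stepTo, Function.update_apply]
  split_ifs with h
  · subst h; omega
  · exact le_rfl

/-- On a cube where the cup product is nonzero, every labelling of the list is nonconstant. -/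
theorem exists_of_cup_ne_zero {n : ℕ} (L : List ((Fin n → ℕ) → ZMod 2)) :
    ∀ (A : Finset (Fin n)) (a : Fin n → ℕ), cup L A a ≠ 0 → ∀ l ∈ L,
      ∃ y z : Fin n → ℕ, (∀ i, a i ≤ y i ∧ y i ≤ a i + if i ∈ A then 1 else 0) ∧
        (∀ i, a i ≤ z i ∧ z i ≤ a i + if i ∈ A then 1 else 0) ∧ l y ≠ l z := by
  induction L with
  | nil => simp
  | cons l L ih =>
    intro A a h l' hl'
    obtain ⟨j, hj, hne⟩ := Finset.exists_ne_zero_of_sum_ne_zero h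
    have hstep : ∀ i, stepTo a j i ≤ a i + if i ∈ A then 1 else 0 := by
      intro i
      simp only [stepTo, Function.update_apply]
      split_ifs <;> simp_all
    rcases List.mem_cons.1 hl' with rfl | hm
    · exact ⟨stepTo a j, a, fun i => ⟨stepTo_le a j i, hstep i⟩, fun i => ⟨le_rfl, by omega⟩,
        sub_ne_zero.1 (left_ne_zero_of_mul hne)⟩
    · obtain ⟨y, z, hy, hz, hyz⟩ := ih _ _ (right_ne_zero_of_mul hne) l' hm
      have key : ∀ w : Fin n → ℕ, (∀ i, stepTo a j i ≤ w i ∧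
          w i ≤ stepTo a j i + if i ∈ A.erase j then 1 else 0) →
          ∀ i, a i ≤ w i ∧ w i ≤ a i + if i ∈ A then 1 else 0 := by
        intro w hw i
        refine ⟨(stepTo_le a j i).trans (hw i).1, (hw i).2.trans ?_⟩
        by_cases hij : i = j
        · subst hij; simpa using hstep i
        · simp [stepTo, hij]
      exact ⟨y, z, key y hy, key z hz, hyz⟩

/-! ### Sums over boxes -/

/-- The sum of `f` over the points `x` with `x j < N` for the directions `j` in the list and
`x j = c j` for the others. -/
def boxSum {n : ℕ} (N : ℕ) :
    List (Fin n) → ((Fin n → ℕ) → ZMod 2) → (Fin n → ℕ) → ZMod 2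
  | [], f, c => f c
  | j :: D, f, c => ∑ t ∈ Finset.range N, boxSum N D f (Function.update c j t)

theorem boxSum_finset_sum {n : ℕ} (N : ℕ) {ι : Type*} (s : Finset ι)
    (f : ι → (Fin n → ℕ) → ZMod 2) (D : List (Fin n)) :
    ∀ c, boxSum N D (fun x => ∑ i ∈ s, f i x) c = ∑ i ∈ s, boxSum N D (f i) c := by
  induction D with
  | nil => intro c; rfl
  | cons j D ih =>
    intro c
    simp only [boxSum, ih]
    exact Finset.sum_comm

theorem boxSum_sub {n : ℕ} (N : ℕ) (f g : (Fin n → ℕ) → ZMod 2) (D : List (Fin n)) :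
    ∀ c, boxSum N D (fun x => f x - g x) c = boxSum N D f c - boxSum N D g c := by
  induction D with
  | nil => intro c; rfl
  | cons j D ih => intro c; simp only [boxSum, ih, Finset.sum_sub_distrib]

theorem boxSum_stepTo {n : ℕ} (N : ℕ) (g : (Fin n → ℕ) → ZMod 2) (j : Fin n)
    (D : List (Fin n)) (hj : j ∉ D) :
    ∀ c, boxSum N D (fun x => g (stepTo x j)) c = boxSum N D g (stepTo c j) := by
  induction D with
  | nil => intro c; rfl
  | cons i D ih =>
    intro c
    simp only [List.mem_cons, not_or] at hj
    simp only [boxSum]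
    refine Finset.sum_congr rfl fun t _ => ?_
    rw [ih hj.2]
    congr 1
    funext k
    simp only [stepTo, Function.update_apply]
    split_ifs <;> simp_all

/-- Summing a difference quotient in direction `j` over a box leaves the two faces orthogonal
to `j`. -/
theorem boxSum_telescope {n : ℕ} (N : ℕ) (g : (Fin n → ℕ) → ZMod 2) (j : Fin n)
    (D : List (Fin n)) (hD : D.Nodup) (hj : j ∈ D) :
    ∀ c, boxSum N D (fun x => g (stepTo x j) - g x) c =
      boxSum N (D.erase j) g (Function.update c j N) -
        boxSum N (D.erase j) g (Function.update c j 0) := by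
  induction D with
  | nil => simp at hj
  | cons i D ih =>
    intro c
    rw [List.nodup_cons] at hD
    by_cases hij : i = j
    · subst hij
      rw [List.erase_cons_head]
      simp only [boxSum, boxSum_sub, boxSum_stepTo N g i D hD.1]
      have hs : ∀ t, stepTo (Function.update c i t) i = Function.update c i (t + 1) := by
        intro t; simp [stepTo]
      simp only [hs]
      exact Finset.sum_range_sub (fun t => boxSum N D g (Function.update c i t)) N
    · have hjD : j ∈ D := by
        rcases List.mem_cons.1 hj with h | h
        · exact absurd h.symm hij
        · exact h
      rw [List.erase_cons_tail (by simpa using hij)]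
      simp only [boxSum, ih hD.2 hjD, Finset.sum_sub_distrib]
      simp only [Function.update_comm hij]

theorem boxSum_eq_zero {n : ℕ} (N : ℕ) (f : (Fin n → ℕ) → ZMod 2) (j : Fin n) (t : ℕ)
    (hf : ∀ x : Fin n → ℕ, x j = t → f x = 0) (D : List (Fin n)) (hj : j ∉ D) :
    ∀ c : Fin n → ℕ, c j = t → boxSum N D f c = 0 := by
  induction D with
  | nil => intro c hc; exact hf c hc
  | cons i D ih =>
    intro c hc
    simp only [List.mem_cons, not_or] at hj
    refine Finset.sum_eq_zero fun s _ => ih hj.2 _ ?_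
    rw [Function.update_of_ne hj.1, hc]

theorem exists_of_boxSum_ne_zero {n : ℕ} (N : ℕ) (f : (Fin n → ℕ) → ZMod 2) (D : List (Fin n)) :
    D.Nodup → ∀ c : Fin n → ℕ, boxSum N D f c ≠ 0 →
      ∃ a, (∀ i ∈ D, a i < N) ∧ (∀ i, i ∉ D → a i = c i) ∧ f a ≠ 0 := by
  induction D with
  | nil => intro _ c h; exact ⟨c, by simp, by simp, h⟩
  | cons i D ih =>
    intro hD c h
    rw [List.nodup_cons] at hD
    obtain ⟨t, ht, hne⟩ := Finset.exists_ne_zero_of_sum_ne_zero h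
    obtain ⟨a, h1, h2, h3⟩ := ih hD.2 _ hne
    refine ⟨a, ?_, ?_, h3⟩
    · intro k hk
      rcases List.mem_cons.1 hk with rfl | hk
      · rw [h2 _ hD.1, Function.update_self]; exact Finset.mem_range.1 ht
      · exact h1 k hk
    · intro k hk
      simp only [List.mem_cons, not_or] at hk
      rw [h2 k hk.2, Function.update_of_ne hk.1]

/-- The cup product of the labellings sums to `1` over a box on whose opposite faces
each labelling takes the values `0` and `1`. -/
theorem boxSum_cup {n : ℕ} (N : ℕ) (l : Fin n → (Fin n → ℕ) → ZMod 2)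
    (h0 : ∀ i x, x i = 0 → l i x = 0) (h1 : ∀ i x, x i = N → l i x = 1) (D : List (Fin n)) :
    D.Nodup → ∀ c, boxSum N D (cup (D.map l) D.toFinset) c = 1 := by
  induction D with
  | nil => intro _ c; rfl
  | cons k D ih =>
    intro hD c
    have hkD := (List.nodup_cons.1 hD).1
    have hD' := (List.nodup_cons.1 hD).2
    have hA : (k :: D).toFinset.erase k = D.toFinset := by
      rw [List.toFinset_cons, Finset.erase_insert (by simpa using hkD)]
    have e : cup ((k :: D).map l) (k :: D).toFinset = fun a => ∑ j ∈ (k :: D).toFinset,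
        (l k (stepTo a j) * cup (D.map l) ((k :: D).toFinset.erase j) (stepTo a j) -
          l k a * cup (D.map l) ((k :: D).toFinset.erase j) a) := by
      funext a; exact cup_cons_eq _ _ _ _
    rw [e, boxSum_finset_sum, Finset.sum_eq_single k]
    · rw [boxSum_telescope N (fun a => l k a * cup (D.map l) ((k :: D).toFinset.erase k) a) k
        (k :: D) hD (by simp), hA, List.erase_cons_head]
      have z0 : boxSum N D (fun a => l k a * cup (D.map l) D.toFinset a)
          (Function.update c k 0) = 0 :=
        boxSum_eq_zero N _ k 0 (fun x hx => by simp [h0 k x hx]) D hkD _ (by simp)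
      have zN : boxSum N D (fun a => l k a * cup (D.map l) D.toFinset a - cup (D.map l) D.toFinset a)
          (Function.update c k N) = 0 :=
        boxSum_eq_zero N _ k N (fun x hx => by simp [h1 k x hx]) D hkD _ (by simp)
      rw [boxSum_sub, ih hD', sub_eq_zero] at zN
      rw [z0, zN, sub_zero]
    · intro j hj hjk
      have hjD : j ∈ D := by
        rw [List.mem_toFinset, List.mem_cons] at hj
        exact hj.resolve_left hjk
      rw [boxSum_telescope N (fun a => l k a * cup (D.map l) ((k :: D).toFinset.erase j) a) j
        (k :: D) hD (by simp [hjD])]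
      have hz : ∀ (t : ℕ) (u : ZMod 2), (∀ x : Fin n → ℕ, x j = t → l j x = u) →
          boxSum N ((k :: D).erase j)
            (fun a => l k a * cup (D.map l) ((k :: D).toFinset.erase j) a)
            (Function.update c j t) = 0 := by
        intro t u hu
        refine boxSum_eq_zero N _ j t (fun x hx => ?_) _ (hD.not_mem_erase) _ (by simp)
        rw [cup_eq_zero (D.map l) j t u _ x (by simp) hx
          ⟨l j, List.mem_map_of_mem hjD, hu⟩, mul_zero]
      rw [hz N 1 (h1 j), hz 0 0 (h0 j), sub_zero]
    · intro h; simp at h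

/-- Discrete Poincaré–Miranda theorem: some unit cube of the grid carries both labels of every
labelling. -/
theorem exists_cell {n : ℕ} (N : ℕ) (l : Fin n → (Fin n → ℕ) → ZMod 2)
    (h0 : ∀ i x, x i = 0 → l i x = 0) (h1 : ∀ i x, x i = N → l i x = 1) :
    ∃ a : Fin n → ℕ, (∀ i, a i < N) ∧ ∀ i, ∃ y z : Fin n → ℕ,
      (∀ k, a k ≤ y k ∧ y k ≤ a k + 1) ∧ (∀ k, a k ≤ z k ∧ z k ≤ a k + 1) ∧
        l i y = 0 ∧ l i z = 1 := by
  have hS := boxSum_cup N l h0 h1 (List.finRange n) (List.nodup_finRange n) 0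
  obtain ⟨a, ha, -, hne⟩ := exists_of_boxSum_ne_zero N _ _ (List.nodup_finRange n) _
    (by rw [hS]; exact one_ne_zero)
  refine ⟨a, fun i => ha i (List.mem_finRange i), fun i => ?_⟩
  obtain ⟨y, z, hy, hz, hyz⟩ := exists_of_cup_ne_zero _ _ _ hne (l i)
    (List.mem_map_of_mem (List.mem_finRange i))
  simp only [List.mem_toFinset, List.mem_finRange, if_true] at hy hz
  have dich : ∀ u w : ZMod 2, u ≠ w → (u = 0 ∧ w = 1) ∨ (w = 0 ∧ u = 1) := by decide
  rcases dich _ _ hyz with h | h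
  · exact ⟨y, z, hy, hz, h.1, h.2⟩
  · exact ⟨z, y, hz, hy, h.1, h.2⟩

/-! ### The continuous complementarity problem -/

theorem tendsto_grid {n : ℕ} {φ : ℕ → ℕ} (hφ : StrictMono φ) (a y : ℕ → Fin n → ℕ)
    (h : ∀ N k, a N k ≤ y N k ∧ y N k ≤ a N k + 1) {α : Fin n → ℝ}
    (ha : Filter.Tendsto (fun N => fun k => (a (φ N) k : ℝ) / ((φ N : ℝ) + 1)) Filter.atTop
      (nhds α)) :
    Filter.Tendsto (fun N => fun k => (y (φ N) k : ℝ) / ((φ N : ℝ) + 1)) Filter.atTop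
      (nhds α) := by
  rw [tendsto_pi_nhds] at ha ⊢
  intro k
  have h1 : Filter.Tendsto (fun N => (1 : ℝ) / ((φ N : ℝ) + 1)) Filter.atTop (nhds 0) :=
    tendsto_one_div_add_atTop_nhds_zero_nat.comp hφ.tendsto_atTop
  have h2 := (ha k).add h1
  rw [add_zero] at h2
  refine tendsto_of_tendsto_of_tendsto_of_le_of_le (ha k) h2 ?_ ?_
  · intro N
    have : (a (φ N) k : ℝ) ≤ y (φ N) k := by exact_mod_cast (h (φ N) k).1
    dsimp only
    gcongr
  · intro N
    have : (y (φ N) k : ℝ) ≤ a (φ N) k + 1 := by exact_mod_cast (h (φ N) k).2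
    dsimp only
    rw [← add_div]
    gcongr

/-- Solvability of the complementarity problem on the cube: each coordinate either meets its
budget with equality, or stays below it at the upper end of the range. -/
theorem exists_complementary {n : ℕ} (s : Fin n → (Fin n → ℝ) → ℝ) (B : Fin n → ℝ)
    (hs : ∀ i, Continuous (s i)) (h0 : ∀ i α, α i = 0 → s i α ≤ B i) :
    ∃ α : Fin n → ℝ, (∀ i, α i ∈ Set.Icc (0:ℝ) 1) ∧
      ∀ i, s i α ≤ B i ∧ (s i α < B i → α i = 1) := by
  classical
  have cell : ∀ N : ℕ, ∃ a : Fin n → ℕ, (∀ i, a i < N + 1) ∧ ∀ i, ∃ y z : Fin n → ℕ,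
      (∀ k, a k ≤ y k ∧ y k ≤ a k + 1) ∧ (∀ k, a k ≤ z k ∧ z k ≤ a k + 1) ∧
        s i (fun k => (y k : ℝ) / ((N : ℝ) + 1)) ≤ B i ∧
        (z i = N + 1 ∨ B i < s i (fun k => (z k : ℝ) / ((N : ℝ) + 1))) := by
    intro N
    obtain ⟨a, ha, hc⟩ := exists_cell (N + 1)
      (fun i x => if x i = N + 1 ∨ B i < s i (fun k => (x k : ℝ) / ((N : ℝ) + 1))
        then (1 : ZMod 2) else 0)
      (by
        intro i x hx
        have := h0 i (fun k => (x k : ℝ) / ((N : ℝ) + 1)) (by simp [hx])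
        rw [if_neg]
        rintro (h | h)
        · omega
        · exact absurd h this.not_gt)
      (by intro i x hx; simp [hx])
    refine ⟨a, ha, fun i => ?_⟩
    obtain ⟨y, z, hy, hz, h1, h2⟩ := hc i
    refine ⟨y, z, hy, hz, ?_, ?_⟩
    · by_contra hcon
      rw [if_pos (Or.inr (not_le.1 hcon))] at h1
      exact one_ne_zero h1
    · by_contra hcon
      rw [if_neg hcon] at h2
      exact zero_ne_one h2
  choose a ha y z hy hz hys hzs using cell
  have hmem : ∀ N, (fun k => (a N k : ℝ) / ((N : ℝ) + 1)) ∈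
      Set.Icc (0 : Fin n → ℝ) 1 := by
    intro N
    refine ⟨fun k => by simp only [Pi.zero_apply]; positivity, fun k => ?_⟩
    have : (a N k : ℝ) ≤ (N : ℝ) + 1 := by exact_mod_cast (ha N k).le
    exact div_le_one_of_le₀ this (by positivity)
  obtain ⟨α, hα, φ, hφ, hlim⟩ := isCompact_Icc.tendsto_subseq hmem
  refine ⟨α, fun i => ⟨hα.1 i, hα.2 i⟩, fun i => ?_⟩
  have ly := tendsto_grid hφ a (fun N => y N i) (fun N => hy N i) hlim
  have lz := tendsto_grid hφ a (fun N => z N i) (fun N => hz N i) hlim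
  refine ⟨le_of_tendsto (((hs i).tendsto α).comp ly) (Filter.Eventually.of_forall fun N =>
    hys (φ N) i), fun hlt => ?_⟩
  have ev := (((hs i).tendsto α).comp lz).eventually_lt_const hlt
  refine tendsto_nhds_unique ((tendsto_pi_nhds.1 lz) i) (tendsto_const_nhds.congr' ?_)
  filter_upwards [ev] with N hN
  rcases hzs (φ N) i with h | h
  · simp only [h]
    push_cast
    rw [div_self (by positivity)]
  · exact absurd hN h.not_gt

/-! ### Continuity of the two highest bids -/

theorem le_hBid {n : ℕ} [NeZero n] {G : Type*} (v : Fin n → G → ℝ) (α : Fin n → ℝ) (j : G)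
    (i : Fin n) : α i * v i j ≤ hBid v α j :=
  Finset.le_sup' (fun i => α i * v i j) (Finset.mem_univ i)

theorem exists_hBid {n : ℕ} [NeZero n] {G : Type*} (v : Fin n → G → ℝ) (α : Fin n → ℝ) (j : G) :
    ∃ i, α i * v i j = hBid v α j := by
  obtain ⟨i, -, hi⟩ := Finset.exists_mem_eq_sup' (Finset.univ_nonempty (α := Fin n))
    (fun i => α i * v i j)
  exact ⟨i, hi.symm⟩

theorem continuous_hBid {n : ℕ} [NeZero n] {G : Type*} (v : Fin n → G → ℝ) (j : G) :
    Continuous (fun α => hBid v α j) :=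
  Continuous.finset_sup'_apply _ (fun i _ => by fun_prop)

theorem foldr_max_le_iff (L : List ℝ) (c : ℝ) :
    L.foldr max 0 ≤ c ↔ 0 ≤ c ∧ ∀ b ∈ L, b ≤ c := by
  induction L with
  | nil => simp
  | cons b L ih => simp only [List.foldr_cons, max_le_iff, ih, List.forall_mem_cons]; tauto

/-- The second-highest bid is at most `c ≥ 0` iff all bids but one are. -/
theorem pBid_le_iff {n : ℕ} [NeZero n] {G : Type*} (v : Fin n → G → ℝ) (α : Fin n → ℝ) (j : G)
    (c : ℝ) : pBid v α j ≤ c ↔ 0 ≤ c ∧ ∃ k, ∀ i, i ≠ k → α i * v i j ≤ c := by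
  obtain ⟨k, hk⟩ := exists_hBid v α j
  have hmem : ∀ b, b ∈ (List.ofFn (fun i : Fin n => α i * v i j)).erase (hBid v α j) ↔
      ∃ i, i ≠ k ∧ α i * v i j = b := by
    intro b
    have hcoe : (((List.ofFn (fun i : Fin n => α i * v i j)).erase (hBid v α j) : List ℝ) :
        Multiset ℝ) = (Finset.univ.erase k).val.map (fun i => α i * v i j) := by
      have h1 : ((List.ofFn (fun i : Fin n => α i * v i j) : List ℝ) : Multiset ℝ) =
          (Finset.univ : Finset (Fin n)).val.map (fun i => α i * v i j) := by
        rw [List.ofFn_eq_map]; rfl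
      rw [← Multiset.coe_erase, h1, ← hk, Finset.erase_val]
      conv_lhs => rw [← Multiset.cons_erase (Finset.mem_univ_val k),
        Multiset.map_cons, Multiset.erase_cons_head]
    rw [← Multiset.mem_coe, hcoe, Multiset.mem_map]
    simp only [Finset.mem_val, Finset.mem_erase, Finset.mem_univ, and_true]
  rw [pBid, foldr_max_le_iff]
  refine and_congr_right fun _ => ⟨fun h => ⟨k, fun i hi => h _ ((hmem _).2 ⟨i, hi, rfl⟩)⟩, ?_⟩
  rintro ⟨k', hk'⟩ b hb
  obtain ⟨i, hi, rfl⟩ := (hmem b).1 hb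
  by_cases hik : i = k'
  · exact (le_hBid v α j i).trans (hk ▸ hk' k (fun h => hi (hik.trans h.symm)))
  · exact hk' i hik

theorem continuous_pBid {n : ℕ} [NeZero n] {G : Type*} (v : Fin n → G → ℝ) (j : G) :
    Continuous (fun α => pBid v α j) := by
  -- The second-highest bid is a min-max expression: omit one bidder so as to minimise the
  -- highest of the remaining bids.
  have h : (fun α => pBid v α j) = fun α => Finset.univ.inf' Finset.univ_nonempty
      (fun k => Finset.univ.sup' Finset.univ_nonempty
        (fun i => if i = k then 0 else max 0 (α i * v i j))) := by
    funext α
    refine eq_of_forall_ge_iff fun c => ?_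
    rw [pBid_le_iff, Finset.inf'_le_iff]
    simp only [Finset.sup'_le_iff, Finset.mem_univ, true_and, forall_const]
    constructor
    · rintro ⟨hc, k, hk⟩
      refine ⟨k, fun i => ?_⟩
      split_ifs with hik
      · exact hc
      · exact max_le hc (hk i hik)
    · rintro ⟨k, hk⟩
      refine ⟨by simpa using hk k, k, fun i hi => ?_⟩
      have := hk i
      rw [if_neg hi] at this
      exact (max_le_iff.1 this).2
  rw [h]
  refine Continuous.finset_inf'_apply _ fun k _ => Continuous.finset_sup'_apply _ fun i _ => ?_
  split_ifs <;> fun_prop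

/-! ### The smoothed game -/

/-- The unnormalised share of buyer `i` in good `j` in the game smoothed at scale `ε`. -/
noncomputable def softWeight {n : ℕ} [NeZero n] {G : Type*} (v : Fin n → G → ℝ) (ε : ℝ)
    (α : Fin n → ℝ) (i : Fin n) (j : G) : ℝ :=
  max 0 (α i * v i j - hBid v α j + ε)

/-- The allocation of the smoothed game: goods are split in proportion to `softWeight`. -/
noncomputable def softAlloc {n : ℕ} [NeZero n] {G : Type*} (v : Fin n → G → ℝ) (ε : ℝ)
    (α : Fin n → ℝ) (i : Fin n) (j : G) : ℝ :=
  softWeight v ε α i j / ∑ k, softWeight v ε α k j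

section Soft

variable {n : ℕ} [NeZero n] {G : Type*} (v : Fin n → G → ℝ) {ε : ℝ}

theorem softWeight_nonneg (α : Fin n → ℝ) (i : Fin n) (j : G) : 0 ≤ softWeight v ε α i j :=
  le_max_left _ _

theorem sum_softWeight_pos (hε : 0 < ε) (α : Fin n → ℝ) (j : G) :
    0 < ∑ k, softWeight v ε α k j := by
  obtain ⟨i, hi⟩ := exists_hBid v α j
  refine Finset.sum_pos' (fun k _ => softWeight_nonneg v α k j) ⟨i, Finset.mem_univ i, ?_⟩
  rw [softWeight, hi]
  simp [hε]

theorem sum_softAlloc (hε : 0 < ε) (α : Fin n → ℝ) (j : G) : ∑ i, softAlloc v ε α i j = 1 := by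
  simp only [softAlloc]
  rw [← Finset.sum_div, div_self (sum_softWeight_pos v hε α j).ne']

theorem softAlloc_nonneg (α : Fin n → ℝ) (i : Fin n) (j : G) : 0 ≤ softAlloc v ε α i j :=
  div_nonneg (softWeight_nonneg v α i j) (Finset.sum_nonneg fun k _ => softWeight_nonneg v α k j)

theorem softAlloc_le_one (hε : 0 < ε) (α : Fin n → ℝ) (i : Fin n) (j : G) :
    softAlloc v ε α i j ≤ 1 := by
  rw [← sum_softAlloc v hε α j]
  exact Finset.single_le_sum (f := fun i => softAlloc v ε α i j)
    (fun k _ => softAlloc_nonneg v α k j) (Finset.mem_univ i)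

theorem continuous_softAlloc (hε : 0 < ε) (i : Fin n) (j : G) :
    Continuous (fun α => softAlloc v ε α i j) := by
  have hw : ∀ k, Continuous (fun α => softWeight v ε α k j) := by
    intro k
    have := continuous_hBid v j
    unfold softWeight
    fun_prop
  exact (hw i).div (continuous_finsetSum _ fun k _ => hw k)
    (fun α => (sum_softWeight_pos v hε α j).ne')

theorem hBid_lt_of_softAlloc_pos (α : Fin n → ℝ) (i : Fin n) (j : G)
    (h : 0 < softAlloc v ε α i j) : hBid v α j < α i * v i j + ε := by
  by_contra hcon
  have : softWeight v ε α i j = 0 := max_eq_left (by linarith)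
  rw [softAlloc, this, zero_div] at h
  exact lt_irrefl _ h

/-- A buyer bidding zero wins only goods of price at most `ε`. -/
theorem softSpend_le (hε : 0 < ε) (α : Fin n → ℝ) (i : Fin n) (j : G) (hi : α i = 0) :
    softAlloc v ε α i j * pBid v α j ≤ ε := by
  rcases (softAlloc_nonneg (ε := ε) v α i j).eq_or_lt with h | h
  · rw [← h, zero_mul]; exact hε.le
  · have hh := hBid_lt_of_softAlloc_pos v α i j h
    rw [hi, zero_mul, zero_add] at hh
    have hp : pBid v α j ≤ ε :=
      (pBid_le_iff v α j ε).2 ⟨hε.le, i, fun k _ => (le_hBid v α j k).trans hh.le⟩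
    calc softAlloc v ε α i j * pBid v α j ≤ softAlloc v ε α i j * ε := by gcongr
      _ ≤ 1 * ε := by gcongr; exact softAlloc_le_one v hε α i j
      _ = ε := one_mul ε

end Soft

/-- Equilibria of the smoothed game exist once the smoothing is fine enough that a buyer bidding
zero cannot exceed any budget. -/
theorem exists_soft_equilibrium {n m : ℕ} [NeZero n] (v : Fin n → Fin m → ℝ) (B : Fin n → ℝ)
    {ε : ℝ} (hε : 0 < ε) (hεB : ∀ i, m * ε ≤ B i) :
    ∃ α : Fin n → ℝ, (∀ i, α i ∈ Set.Icc (0:ℝ) 1) ∧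
      ∀ i, ∑ j, softAlloc v ε α i j * pBid v α j ≤ B i ∧
        (∑ j, softAlloc v ε α i j * pBid v α j < B i → α i = 1) := by
  refine exists_complementary (fun i α => ∑ j, softAlloc v ε α i j * pBid v α j) B ?_ ?_
  · intro i
    exact continuous_finsetSum _ fun j _ =>
      (continuous_softAlloc v hε i j).mul (continuous_pBid v j)
  · intro i α hi
    calc ∑ j, softAlloc v ε α i j * pBid v α j ≤ ∑ _j : Fin m, ε :=
          Finset.sum_le_sum fun j _ => softSpend_le v hε α i j hi
      _ = m * ε := by simp
      _ ≤ B i := hεB i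

/-! ### Removing the smoothing -/

/-- Every second-price pacing game (with `n ≥ 1` buyers, `m` goods, nonnegative
valuations and strictly positive budgets) admits a second-price pacing equilibrium. -/
theorem sppe_exists (n m : ℕ) [NeZero n] (v : Fin n → Fin m → ℝ) (B : Fin n → ℝ)
    (hv : ∀ i j, 0 ≤ v i j) (hB : ∀ i, 0 < B i) :
    ∃ (α : Fin n → ℝ) (x : Fin n → Fin m → ℝ), IsSPPE v B α x := by
  obtain ⟨b, hb, hbB⟩ : ∃ b : ℝ, 0 < b ∧ ∀ i, b ≤ B i := by
    refine ⟨Finset.univ.inf' Finset.univ_nonempty B, ?_,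
      fun i => Finset.inf'_le B (Finset.mem_univ i)⟩
    rw [Finset.lt_inf'_iff]
    exact fun i _ => hB i
  have hδ : 0 < b / ((m : ℝ) + 1) := by positivity
  set ε : ℕ → ℝ := fun N => b / ((m : ℝ) + 1) * (1 / ((N : ℝ) + 1)) with hεdef
  have hε : ∀ N, 0 < ε N := fun N => by positivity
  have hεB : ∀ N i, m * ε N ≤ B i := by
    intro N i
    refine le_trans ?_ (hbB i)
    have h1 : (m : ℝ) / ((m : ℝ) + 1) ≤ 1 := div_le_one_of_le₀ (by linarith) (by positivity)
    have h2 : (1 : ℝ) / ((N : ℝ) + 1) ≤ 1 :=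
      div_le_one_of_le₀ (by linarith [Nat.cast_nonneg (α := ℝ) N]) (by positivity)
    calc (m : ℝ) * ε N = b * ((m : ℝ) / ((m : ℝ) + 1) * (1 / ((N : ℝ) + 1))) := by
          simp only [hεdef]; ring
      _ ≤ b * (1 * 1) := by gcongr
      _ = b := by ring
  have hε0 : Filter.Tendsto ε Filter.atTop (nhds 0) := by
    have h := (tendsto_one_div_add_atTop_nhds_zero_nat (𝕜 := ℝ)).const_mul (b / ((m : ℝ) + 1))
    rwa [mul_zero] at h
  choose α hα hs using fun N => exists_soft_equilibrium v B (hε N) (hεB N)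
  have hmem : ∀ N, (α N, softAlloc v (ε N) (α N)) ∈
      (Set.Icc (0 : Fin n → ℝ) 1 ×ˢ Set.Icc (0 : Fin n → Fin m → ℝ) 1) := fun N =>
    ⟨⟨fun i => (hα N i).1, fun i => (hα N i).2⟩,
      fun i j => softAlloc_nonneg v _ i j, fun i j => softAlloc_le_one v (hε N) _ i j⟩
  obtain ⟨⟨β, x⟩, hβx, φ, hφ, hlim⟩ := (isCompact_Icc.prod isCompact_Icc).tendsto_subseq hmem
  have hβ : Filter.Tendsto (fun N => α (φ N)) Filter.atTop (nhds β) :=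
    (continuous_fst.tendsto _).comp hlim
  have hx' : Filter.Tendsto (fun N => softAlloc v (ε (φ N)) (α (φ N))) Filter.atTop (nhds x) :=
    (continuous_snd.tendsto _).comp hlim
  have hx : ∀ i j, Filter.Tendsto (fun N => softAlloc v (ε (φ N)) (α (φ N)) i j) Filter.atTop
      (nhds (x i j)) := fun i j => (tendsto_pi_nhds.1 ((tendsto_pi_nhds.1 hx') i)) j
  have hβi : ∀ i, Filter.Tendsto (fun N => α (φ N) i) Filter.atTop (nhds (β i)) :=
    fun i => (tendsto_pi_nhds.1 hβ) i
  have hε' : Filter.Tendsto (fun N => ε (φ N)) Filter.atTop (nhds 0) :=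
    hε0.comp hφ.tendsto_atTop
  have hsum : ∀ j, ∑ i, x i j = 1 := fun j =>
    tendsto_nhds_unique (tendsto_finsetSum Finset.univ fun i _ => hx i j)
      (tendsto_const_nhds.congr fun N => (sum_softAlloc v (hε (φ N)) (α (φ N)) j).symm)
  have hspend : ∀ i, Filter.Tendsto
      (fun N => ∑ j, softAlloc v (ε (φ N)) (α (φ N)) i j * pBid v (α (φ N)) j) Filter.atTop
      (nhds (∑ j, x i j * pBid v β j)) := fun i =>
    tendsto_finsetSum _ fun j _ => (hx i j).mul (((continuous_pBid v j).tendsto β).comp hβ)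
  refine ⟨β, x, fun i => ⟨hβx.1.1 i, hβx.1.2 i⟩, fun i j => ⟨hβx.2.1 i j, hβx.2.2 i j⟩,
    fun j => (hsum j).le, ?_, fun j _ => hsum j, ?_, ?_⟩
  · intro i j hpos
    refine le_antisymm (le_hBid v β j i) ?_
    have hr := ((hβi i).mul_const (v i j)).add hε'
    rw [add_zero] at hr
    refine le_of_tendsto_of_tendsto (((continuous_hBid v j).tendsto β).comp hβ) hr ?_
    filter_upwards [(hx i j).eventually_const_lt hpos] with N hN
    exact (hBid_lt_of_softAlloc_pos v _ i j hN).le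
  · exact fun i => le_of_tendsto (hspend i) (Filter.Eventually.of_forall fun N => (hs (φ N) i).1)
  · intro i hlt
    refine tendsto_nhds_unique (hβi i) (tendsto_const_nhds.congr' ?_)
    filter_upwards [(hspend i).eventually_lt_const hlt] with N hN
    exact ((hs (φ N) i).2 hN).symm
end

section
/- In any second-price pacing equilibrium (α, x), every buyer's pacing multiplier is strictly positive: α_i > 0 for all i ∈ [n]. -/
/-- The price is the maximum of `0` and some of the bids, all of which are at most the highest
bid. -/
lemma pBid_nonpos_of_hBid_eq_zero {n : ℕ} [NeZero n] {G : Type*} (v : Fin n → G → ℝ)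
    (α : Fin n → ℝ) (j : G) (h : hBid v α j = 0) : pBid v α j ≤ 0 := by
  have key : ∀ l : List ℝ, (∀ a ∈ l, a ≤ 0) → l.foldr max 0 ≤ 0 := by
    intro l
    induction l with
    | nil => simp
    | cons a l ih =>
      intro hl
      exact max_le (hl a (by simp)) (ih fun b hb => hl b (by simp [hb]))
  refine key _ fun a ha => ?_
  obtain ⟨i, rfl⟩ := (List.mem_ofFn' _ _).1 (List.mem_of_mem_erase ha)
  rw [← h]
  exact Finset.le_sup' (fun i => α i * v i j) (Finset.mem_univ i)

/-- In any second-price pacing equilibrium, every buyer's pacing multiplier is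
strictly positive. -/
theorem sppe_alpha_pos (n m : ℕ) [NeZero n] (v : Fin n → Fin m → ℝ) (B : Fin n → ℝ)
    (hv : ∀ i j, 0 ≤ v i j) (hB : ∀ i, 0 < B i)
    (α : Fin n → ℝ) (x : Fin n → Fin m → ℝ) (heq : IsSPPE v B α x) :
    ∀ i, 0 < α i := by
  intro i
  obtain ⟨h01, hx, -, ha, -, -, hd⟩ := heq
  refine lt_of_le_of_ne (h01 i).1 fun h0 => ?_
  have hspend : ∑ j, x i j * pBid v α j ≤ 0 := by
    refine Finset.sum_nonpos fun j _ => ?_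
    rcases (hx i j).1.eq_or_lt with h | h
    · simp [← h]
    · have hh : hBid v α j = 0 := by rw [← ha i j h, ← h0, zero_mul]
      exact mul_nonpos_of_nonneg_of_nonpos h.le (pBid_nonpos_of_hBid_eq_zero v α j hh)
  have h1 := hd i (hspend.trans_lt (hB i))
  linarith
end

section
/- In any second-price pacing equilibrium (α, x), every buyer's pacing multiplier is exactly recovered from the vector of highest paced bids: for every buyer i ∈ [n], α_i = min({1} ∪ {h_j(α)/v_{ij} : j ∈ [m] with v_{ij} > 0}). -/
theorem mul_le_hBid {n : ℕ} [NeZero n] {G : Type*} (v : Fin n → G → ℝ)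
    (α : Fin n → ℝ) (i : Fin n) (j : G) : α i * v i j ≤ hBid v α j :=
  Finset.le_sup' (fun i => α i * v i j) (Finset.mem_univ i)

theorem foldr_max_le (l : List ℝ) (c : ℝ) (hc : 0 ≤ c) (h : ∀ a ∈ l, a ≤ c) :
    l.foldr max 0 ≤ c := by
  induction l with
  | nil => simpa using hc
  | cons a l ih =>
    simp only [List.foldr_cons]
    exact max_le (h a (by simp)) (ih fun b hb => h b (by simp [hb]))

/-- Nonnegativity of `h_j` is needed because `pBid` is at least `0` by construction. -/
theorem pBid_le_hBid {n : ℕ} [NeZero n] {G : Type*} (v : Fin n → G → ℝ)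
    (α : Fin n → ℝ) (j : G) (h : 0 ≤ hBid v α j) : pBid v α j ≤ hBid v α j := by
  refine foldr_max_le _ _ h fun a ha => ?_
  obtain ⟨k, rfl⟩ := (List.mem_ofFn' _ _).1 (List.mem_of_mem_erase ha)
  exact mul_le_hBid v α k j

open scoped Classical in
/-- In any SPPE, each buyer's multiplier is recovered from the vector of highest paced
bids: `α i` is the minimum of `1` together with the ratios `h_j(α) / v i j` over the
goods `j` that buyer `i` values positively. -/
theorem sppe_alpha_eq_min (n m : ℕ) [NeZero n] (v : Fin n → Fin m → ℝ)
    (B : Fin n → ℝ) (hv : ∀ i j, 0 ≤ v i j) (hB : ∀ i, 0 < B i)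
    (α : Fin n → ℝ) (x : Fin n → Fin m → ℝ) (heq : IsSPPE v B α x) (i : Fin n) :
    α i = (insert (1:ℝ) ((Finset.univ.filter (fun j : Fin m => 0 < v i j)).image
        (fun j => hBid v α j / v i j))).inf' (Finset.insert_nonempty _ _) id := by
  obtain ⟨hα, hx, -, hwin, -, -, hbud⟩ := heq
  apply le_antisymm
  · refine Finset.le_inf' _ _ fun b hb => ?_
    simp only [Finset.mem_insert, Finset.mem_image, Finset.mem_filter, Finset.mem_univ,
      true_and] at hb
    rcases hb with rfl | ⟨j, hj, rfl⟩
    · exact (hα i).2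
    · exact (le_div_iff₀ hj).2 (mul_le_hBid v α i j)
  · by_cases h1 : α i = 1
    · rw [h1]
      exact Finset.inf'_le id (Finset.mem_insert_self _ _)
    · have hspend : 0 < ∑ j, x i j * pBid v α j :=
        (hB i).trans_le (not_lt.1 fun h => h1 (hbud i h))
      obtain ⟨j, -, hj⟩ : ∃ j ∈ Finset.univ, 0 < x i j * pBid v α j := by
        by_contra! hcon
        exact absurd hspend (not_lt.2 (Finset.sum_nonpos hcon))
      have hp : 0 < pBid v α j := pos_of_mul_pos_right hj (hx i j).1
      have hxij : 0 < x i j := pos_of_mul_pos_left hj hp.le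
      have hh : α i * v i j = hBid v α j := hwin i j hxij
      have hh0 : 0 ≤ hBid v α j := hh ▸ mul_nonneg (hα i).1 (hv i j)
      have hpos : 0 < α i * v i j := hh ▸ hp.trans_le (pBid_le_hBid v α j hh0)
      have hvij : 0 < v i j := pos_of_mul_pos_right hpos (hα i).1
      have hmin : α i = hBid v α j / v i j := by
        rw [← hh, mul_div_cancel_right₀ _ hvij.ne']
      rw [hmin]
      refine Finset.inf'_le id (Finset.mem_insert_of_mem ?_)
      exact Finset.mem_image.2 ⟨j, by simpa using hvij, rfl⟩
end

section
/- Let G be a second-price pacing game with n buyers, goods [m], valuations v, and budgets B, such that the goods admit a type map t : [m] → [c] with v_{ij} = w_{i, t(j)} for all buyers i and goods j (all goods of the same type have identical valuation profiles). Let Ĝ be the aggregated game with the same buyers and budgets and with c goods, where buyer i values aggregate good τ at v̂_{iτ} = |t⁻¹(τ)| · w_{iτ}. If (α̂, x̂) is a second-price pacing equilibrium of Ĝ, then (α̂, x), where x_{ij} = x̂_{i, t(j)} for all i ∈ [n] and j ∈ [m], is a second-price pacing equilibrium of G. -/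
theorem hBid_scale {n : ℕ} [NeZero n] {G G' : Type*} (v : Fin n → G → ℝ) (v' : Fin n → G' → ℝ)
    (α : Fin n → ℝ) (j : G) (j' : G') (k : ℝ) (hk : 0 ≤ k) (h : ∀ i, v' i j' = k * v i j) :
    hBid v' α j' = k * hBid v α j := by
  unfold hBid
  rw [Finset.mul₀_sup' hk]
  simp only [h, mul_left_comm]

theorem foldr_max_scale (l : List ℝ) (k : ℝ) (hk : 0 ≤ k) :
    (l.map (fun y => k * y)).foldr max 0 = k * l.foldr max 0 := by
  induction l with
  | nil => simp
  | cons a l ih => simp only [List.map_cons, List.foldr_cons, ih, mul_max_of_nonneg _ _ hk]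

theorem foldr_max_eq_zero (l : List ℝ) (h : ∀ a ∈ l, a = 0) : l.foldr max 0 = 0 := by
  induction l with
  | nil => simp
  | cons a l ih =>
    rw [List.foldr_cons, ih fun b hb => h b (List.mem_cons_of_mem _ hb), h a List.mem_cons_self,
      max_self]

theorem pBid_scale {n : ℕ} [NeZero n] {G G' : Type*} (v : Fin n → G → ℝ) (v' : Fin n → G' → ℝ)
    (α : Fin n → ℝ) (j : G) (j' : G') (k : ℝ) (hk : 0 ≤ k) (h : ∀ i, v' i j' = k * v i j) :
    pBid v' α j' = k * pBid v α j := by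
  rcases hk.eq_or_lt with rfl | hpos
  · -- Scaling by `0` is not injective and does not commute with `erase`; all bids vanish instead.
    rw [zero_mul]
    refine foldr_max_eq_zero _ fun a ha => ?_
    obtain ⟨i, rfl⟩ := (List.mem_ofFn' _ _).1 (List.mem_of_mem_erase ha)
    simp [h]
  · have hinj : Function.Injective (fun y : ℝ => k * y) := mul_right_injective₀ hpos.ne'
    unfold pBid
    rw [← foldr_max_scale _ k hk, List.map_erase hinj, List.map_ofFn,
      hBid_scale v v' α j j' k hk h]
    simp only [h, mul_left_comm, Function.comp_def]

open scoped Classical in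
theorem spend_eq {m c : ℕ} (t : Fin m → Fin c) (x p : Fin c → ℝ) :
    ∑ τ, x τ * (((Finset.univ.filter (fun j : Fin m => t j = τ)).card : ℝ) * p τ) =
      ∑ j, x (t j) * p (t j) := by
  rw [← Finset.sum_fiberwise Finset.univ t]
  refine Finset.sum_congr rfl fun τ _ => ?_
  rw [Finset.sum_congr rfl (g := fun _ => x τ * p τ)
    (fun j hj => by rw [(Finset.mem_filter.1 hj).2]), Finset.sum_const, nsmul_eq_mul]
  convert mul_left_comm _ _ _ using 2

open scoped Classical in
/-- If the goods of a game admit a type map `t` (goods of the same type have identical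
valuation profiles `w`), and `(α̂, x̂)` is an SPPE of the aggregated game with one good
per type valued at `|t⁻¹(τ)| · w i τ`, then expanding the allocation by
`x i j = x̂ i (t j)` yields an SPPE of the original game. -/
theorem sppe_aggregate_expand (n m c : ℕ) [NeZero n]
    (w : Fin n → Fin c → ℝ) (t : Fin m → Fin c)
    (v : Fin n → Fin m → ℝ) (htype : ∀ i j, v i j = w i (t j))
    (hw : ∀ i τ, 0 ≤ w i τ) (B : Fin n → ℝ) (hB : ∀ i, 0 < B i)
    (vhat : Fin n → Fin c → ℝ)
    (hvhat : ∀ i τ, vhat i τ =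
      ((Finset.univ.filter (fun j : Fin m => t j = τ)).card : ℝ) * w i τ)
    (αhat : Fin n → ℝ) (xhat : Fin n → Fin c → ℝ)
    (heq : IsSPPE vhat B αhat xhat) :
    IsSPPE v B αhat (fun i j => xhat i (t j)) := by
  obtain ⟨h1, h2, h3, ha, hb, hc, hd⟩ := heq
  have hh : ∀ j, hBid v αhat j = hBid w αhat (t j) := fun j => by simp only [hBid, htype]
  have hp : ∀ j, pBid v αhat j = pBid w αhat (t j) := fun j => by
    simp only [pBid, hBid, htype]
  have hhs : ∀ τ, hBid vhat αhat τ = _ * hBid w αhat τ := fun τ =>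
    hBid_scale w vhat αhat τ τ _ (Nat.cast_nonneg _) fun i => hvhat i τ
  have hps : ∀ τ, pBid vhat αhat τ = _ * pBid w αhat τ := fun τ =>
    pBid_scale w vhat αhat τ τ _ (Nat.cast_nonneg _) fun i => hvhat i τ
  have hpos : ∀ j, (0 : ℝ) < ((Finset.univ.filter (fun j' : Fin m => t j' = t j)).card : ℝ) :=
    fun j => Nat.cast_pos.2 (Finset.card_pos.2 ⟨j, by simp⟩)
  have hs : ∀ i, ∑ j, xhat i (t j) * pBid v αhat j = ∑ τ, xhat i τ * pBid vhat αhat τ := by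
    intro i
    simp only [hps, hp]
    exact (spend_eq t (xhat i) (pBid w αhat)).symm
  refine ⟨h1, fun i j => h2 i (t j), fun j => h3 (t j), fun i j hx => ?_, fun j hj => ?_,
    fun i => ?_, fun i hi => ?_⟩
  · have := ha i (t j) hx
    rw [hhs, hvhat, mul_left_comm] at this
    rw [htype, hh]
    exact mul_left_cancel₀ (hpos j).ne' this
  · refine hb (t j) ?_
    rw [hhs]
    exact mul_pos (hpos j) (hh j ▸ hj)
  · exact (hs i).trans_le (hc i)
  · exact hd i ((hs i).symm.trans_lt hi)
end

section
/- Let H_1, …, H_k be k distinct affine hyperplanes in ℝ^d in general position. Then the number of connected components of ℝ^d \ (H_1 ∪ ⋯ ∪ H_k) equals ∑_{i=0}^{d} C(k, i), where C(k, i) denotes the binomial coefficient (taken to be 0 when i > k). -/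
/-!
The components of the complement are the nonempty cells cut out by prescribing the sign of every
affine form `f i x = ∑ s, a i s * x s - b i`: the sign pattern is locally constant on the
complement, and the set of points with a given pattern is convex. So the task is to count
realizable sign patterns, which is done by deletion and restriction.

For disjoint `S` and `T`, let `N(S, T)` be the number of sign patterns of the forms indexed by `S`
that occur on the flat `⋂ j ∈ T, H j`. If `g ∉ S ∪ T`, a cell `C` of `(S, T)` is cut by `H g` into
two cells when it meets `H g` and is contained in one side otherwise, so
`N(S ∪ {g}, T) = N(S, T) + N(S, T ∪ {g})` (`realizable_split`). This uses convexity of `C`, its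
relative openness, and the consequence of general position that `f g` is not constant on the flat
of `T` as soon as it vanishes somewhere on it. Since `N(∅, T)` is `1` for `#T ≤ d` and `0`
otherwise, Pascal's rule gives `N(S, T) = ∑ i < d + 1 - #T, C(#S, i)` (`patternCount_eq`).
-/

namespace HyperplaneCount

open Finset

/-! ### Sign patterns on flats -/

/-- The sign pattern that is positive on `P` and negative on the rest of `S`, for the functions `f i`
with `i ∈ S`, is attained at a common zero of the functions `f j`, `j ∈ T`. -/
def Realizable {E ι : Type*} (f : ι → E → ℝ) (S T P : Finset ι) : Prop :=
  ∃ x, (∀ j ∈ T, f j x = 0) ∧ (∀ i ∈ S, i ∈ P → 0 < f i x) ∧ (∀ i ∈ S, i ∉ P → f i x < 0)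

open Classical in
/-- The number of sign patterns of the functions `f i`, `i ∈ S`, attained on the common zero set of
the `f j`, `j ∈ T`. A pattern is encoded by the subset of `S` on which it is positive. -/
noncomputable def patternCount {E ι : Type*} (f : ι → E → ℝ) (S T : Finset ι) : ℕ :=
  ∑ P ∈ S.powerset, if Realizable f S T P then 1 else 0

/-- `f` is affine, in the form of its behaviour under translation by a difference of points. -/
def IsAff {E : Type*} [AddCommGroup E] [Module ℝ E] (f : E → ℝ) : Prop :=
  ∀ x p q : E, ∀ t : ℝ, f (x + t • (p - q)) = f x + t * (f p - f q)

section Cells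

variable {E ι : Type*} {f : ι → E → ℝ}

lemma realizable_insert_neg [DecidableEq ι] {S T P : Finset ι} {g : ι} (hgP : g ∉ P) :
    Realizable f (insert g S) T P ↔ ∃ x, f g x < 0 ∧ (∀ j ∈ T, f j x = 0) ∧
      (∀ i ∈ S, i ∈ P → 0 < f i x) ∧ (∀ i ∈ S, i ∉ P → f i x < 0) := by
  unfold Realizable
  refine exists_congr fun x => ?_
  simp only [Finset.forall_mem_insert]
  tauto

lemma realizable_insert_pos [DecidableEq ι] {S T P : Finset ι} {g : ι} (hgS : g ∉ S) :
    Realizable f (insert g S) T (insert g P) ↔ ∃ x, 0 < f g x ∧ (∀ j ∈ T, f j x = 0) ∧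
      (∀ i ∈ S, i ∈ P → 0 < f i x) ∧ (∀ i ∈ S, i ∉ P → f i x < 0) := by
  unfold Realizable
  refine exists_congr fun x => ?_
  have h : ∀ i ∈ S, (i ∈ insert g P ↔ i ∈ P) := fun i hi => by
    have : i ≠ g := fun h => hgS (h ▸ hi)
    simp [this]
  simp only [Finset.forall_mem_insert, Finset.mem_insert_self, not_true_eq_false,
    false_imp_iff, true_imp_iff, true_and]
  constructor
  · rintro ⟨h1, ⟨h2, h3⟩, h4⟩
    exact ⟨h2, h1, fun i hi hP => h3 i hi ((h i hi).2 hP),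
      fun i hi hP => h4 i hi (fun h' => hP ((h i hi).1 h'))⟩
  · rintro ⟨h2, h1, h3, h4⟩
    exact ⟨h1, ⟨h2, fun i hi hP => h3 i hi ((h i hi).1 hP)⟩,
      fun i hi hP => h4 i hi (fun h' => hP ((h i hi).2 h'))⟩

lemma realizable_insert_zero [DecidableEq ι] {S T P : Finset ι} {g : ι} :
    Realizable f S (insert g T) P ↔ ∃ x, f g x = 0 ∧ (∀ j ∈ T, f j x = 0) ∧
      (∀ i ∈ S, i ∈ P → 0 < f i x) ∧ (∀ i ∈ S, i ∉ P → f i x < 0) := by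
  unfold Realizable
  refine exists_congr fun x => ?_
  simp only [Finset.forall_mem_insert]
  tauto

end Cells

variable {E ι : Type*} [AddCommGroup E] [Module ℝ E] {f : ι → E → ℝ}

/-! ### Deletion and restriction -/

/-- A cell is relatively open: a small move in either direction along its flat stays inside. -/
lemma exists_small_move (hf : ∀ i, IsAff (f i)) {S T P : Finset ι} {x p q : E}
    (hT : ∀ j ∈ T, f j x = 0) (hpos : ∀ i ∈ S, i ∈ P → 0 < f i x)
    (hneg : ∀ i ∈ S, i ∉ P → f i x < 0) (hp : ∀ j ∈ T, f j p = 0) (hq : ∀ j ∈ T, f j q = 0) :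
    ∃ ε > 0, ∀ t : ℝ, |t| ≤ ε → (∀ j ∈ T, f j (x + t • (p - q)) = 0) ∧
      (∀ i ∈ S, i ∈ P → 0 < f i (x + t • (p - q))) ∧
      (∀ i ∈ S, i ∉ P → f i (x + t • (p - q)) < 0) := by
  have key : ∀ᶠ t : ℝ in nhds 0, ∀ i ∈ S, (i ∈ P → 0 < f i (x + t • (p - q))) ∧
      (i ∉ P → f i (x + t • (p - q)) < 0) := by
    rw [Filter.eventually_all_finset]
    intro i hi
    have hc : Filter.Tendsto (fun t : ℝ => f i (x + t • (p - q))) (nhds 0) (nhds (f i x)) := by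
      have : Continuous fun t : ℝ => f i x + t * (f i p - f i q) := by fun_prop
      simpa [hf i x p q] using this.tendsto 0
    by_cases hP : i ∈ P
    · filter_upwards [hc.eventually_const_lt (hpos i hi hP)] with t ht
      exact ⟨fun _ => ht, fun h => absurd hP h⟩
    · filter_upwards [hc.eventually_lt_const (hneg i hi hP)] with t ht
      exact ⟨fun h => absurd h hP, fun _ => ht⟩
  obtain ⟨ε, hε, h⟩ := Metric.eventually_nhds_iff.1 key
  refine ⟨ε / 2, by positivity, fun t ht => ?_⟩
  have ht' := h (y := t) (by rw [Real.dist_eq, sub_zero]; linarith)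
  refine ⟨fun j hj => ?_, fun i hi => (ht' i hi).1, fun i hi => (ht' i hi).2⟩
  rw [hf j x p q, hT j hj, hp j hj, hq j hj]; ring

/-- Convexity of cells: if an affine function takes a negative and a positive value
on a cell, then it vanishes somewhere on that cell. -/
lemma exists_zero_of_neg_of_pos (hf : ∀ i, IsAff (f i)) {S T P : Finset ι} {g : ι} {x y : E}
    (hxT : ∀ j ∈ T, f j x = 0) (hxpos : ∀ i ∈ S, i ∈ P → 0 < f i x)
    (hxneg : ∀ i ∈ S, i ∉ P → f i x < 0)
    (hyT : ∀ j ∈ T, f j y = 0) (hypos : ∀ i ∈ S, i ∈ P → 0 < f i y)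
    (hyneg : ∀ i ∈ S, i ∉ P → f i y < 0) (hx : f g x < 0) (hy : 0 < f g y) :
    ∃ z, f g z = 0 ∧ (∀ j ∈ T, f j z = 0) ∧ (∀ i ∈ S, i ∈ P → 0 < f i z) ∧
      (∀ i ∈ S, i ∉ P → f i z < 0) := by
  have hd : 0 < f g y - f g x := by linarith
  -- the point where the interpolation `f g x + t * (f g y - f g x)` vanishes
  obtain ⟨t, ht⟩ : ∃ t, t = -f g x / (f g y - f g x) := ⟨_, rfl⟩
  have ht0 : 0 < t := by rw [ht]; exact div_pos (by linarith) hd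
  have ht1 : t < 1 := by rw [ht, div_lt_one hd]; linarith
  refine ⟨x + t • (y - x), ?_, fun j hj => ?_, fun i hi hP => ?_, fun i hi hP => ?_⟩
  · rw [hf g, ht]; field_simp; ring
  · rw [hf j, hxT j hj, hyT j hj]; ring
  · rw [hf i]
    nlinarith [mul_pos ht0 (hypos i hi hP), mul_pos (sub_pos.2 ht1) (hxpos i hi hP)]
  · rw [hf i]
    nlinarith [mul_pos ht0 (neg_pos.2 (hyneg i hi hP)),
      mul_pos (sub_pos.2 ht1) (neg_pos.2 (hxneg i hi hP))]

open Classical in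
/-- Deletion and restriction for one cell: the hyperplane `f g = 0` splits a nonempty cell in two
exactly when it meets the cell. -/
lemma realizable_split [DecidableEq ι] (hf : ∀ i, IsAff (f i)) {S T P : Finset ι} {g : ι}
    (hgS : g ∉ S) (hgP : g ∉ P)
    (hnc : (∃ x, f g x = 0 ∧ ∀ j ∈ T, f j x = 0) →
      ∃ p q, (∀ j ∈ T, f j p = 0) ∧ (∀ j ∈ T, f j q = 0) ∧ f g q < f g p) :
    (if Realizable f (insert g S) T P then 1 else 0) +
      (if Realizable f (insert g S) T (insert g P) then 1 else 0) =
    (if Realizable f S T P then 1 else 0) + (if Realizable f S (insert g T) P then 1 else 0) := by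
  have hn := realizable_insert_neg (f := f) (S := S) (T := T) hgP
  have hp := realizable_insert_pos (f := f) (T := T) (P := P) hgS
  have hz := realizable_insert_zero (f := f) (S := S) (T := T) (P := P) (g := g)
  have hn' : Realizable f (insert g S) T P → Realizable f S T P := by
    rw [hn]; rintro ⟨x, -, h⟩; exact ⟨x, h⟩
  have hp' : Realizable f (insert g S) T (insert g P) → Realizable f S T P := by
    rw [hp]; rintro ⟨x, -, h⟩; exact ⟨x, h⟩
  have hboth : Realizable f (insert g S) T P → Realizable f (insert g S) T (insert g P) →
      Realizable f S (insert g T) P := by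
    rw [hn, hp, hz]
    rintro ⟨x, hx, h1, h2, h3⟩ ⟨y, hy, h4, h5, h6⟩
    exact exists_zero_of_neg_of_pos hf h1 h2 h3 h4 h5 h6 hx hy
  have hzero : Realizable f S (insert g T) P →
      Realizable f (insert g S) T P ∧ Realizable f (insert g S) T (insert g P) := by
    rw [hn, hp, hz]
    rintro ⟨x, hx, h1, h2, h3⟩
    obtain ⟨p, q, h4, h5, hlt⟩ := hnc ⟨x, hx, h1⟩
    obtain ⟨ε, hε, h⟩ := exists_small_move hf h1 h2 h3 h4 h5
    refine ⟨⟨_, ?_, h (-ε) (by rw [abs_neg, abs_of_pos hε])⟩,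
      ⟨_, ?_, h ε (by rw [abs_of_pos hε])⟩⟩
    · rw [hf g, hx]; nlinarith [mul_pos hε (sub_pos.2 hlt)]
    · rw [hf g, hx]; nlinarith [mul_pos hε (sub_pos.2 hlt)]
  have hone : Realizable f S T P → Realizable f (insert g S) T P ∨
      Realizable f (insert g S) T (insert g P) ∨ Realizable f S (insert g T) P := by
    rw [hn, hp, hz]
    rintro ⟨x, h⟩
    rcases lt_trichotomy (f g x) 0 with h0 | h0 | h0
    · exact Or.inl ⟨x, h0, h⟩
    · exact Or.inr (Or.inr ⟨x, h0, h⟩)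
    · exact Or.inr (Or.inl ⟨x, h0, h⟩)
  clear hn hp hz hnc
  by_cases A : Realizable f (insert g S) T P <;>
  by_cases B : Realizable f (insert g S) T (insert g P) <;>
  by_cases C : Realizable f S T P <;>
  by_cases D : Realizable f S (insert g T) P <;>
  simp only [A, B, C, D, if_true, if_false, true_imp_iff, false_imp_iff, imp_false, and_self,
    and_true, true_and, or_self, or_true, true_or, not_true_eq_false, and_false, false_and]
    at hn' hp' hboth hzero hone ⊢

lemma patternCount_insert [DecidableEq ι] (hf : ∀ i, IsAff (f i)) {S T : Finset ι} {g : ι}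
    (hgS : g ∉ S)
    (hnc : (∃ x, f g x = 0 ∧ ∀ j ∈ T, f j x = 0) →
      ∃ p q, (∀ j ∈ T, f j p = 0) ∧ (∀ j ∈ T, f j q = 0) ∧ f g q < f g p) :
    patternCount f (insert g S) T = patternCount f S T + patternCount f S (insert g T) := by
  unfold patternCount
  rw [Finset.sum_powerset_insert hgS, ← Finset.sum_add_distrib, ← Finset.sum_add_distrib]
  refine Finset.sum_congr rfl fun P hP => ?_
  exact realizable_split hf hgS (fun h => hgS (Finset.mem_powerset.1 hP h)) hnc

/-! ### Counting patterns in general position -/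

lemma sum_choose_succ (n m : ℕ) :
    ∑ i ∈ range m, (n + 1).choose i =
      ∑ i ∈ range m, n.choose i + ∑ i ∈ range (m - 1), n.choose i := by
  cases m with
  | zero => simp
  | succ m =>
    rw [Finset.sum_range_succ', Finset.sum_range_succ' (fun i => n.choose i)]
    simp only [Nat.choose_succ_succ, Finset.sum_add_distrib, Nat.choose_zero_right,
      Nat.add_sub_cancel]
    ring

/-- The count of sign patterns on flats. The truncated subtraction is intended: for `d < #T` the
flat is empty and so is the range of summation. -/
lemma patternCount_eq [DecidableEq ι] (hf : ∀ i, IsAff (f i)) (d : ℕ)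
    (hne : ∀ T : Finset ι, (∃ x, ∀ j ∈ T, f j x = 0) ↔ #T ≤ d)
    (hnc : ∀ (T : Finset ι) (g : ι), g ∉ T → (∃ x, f g x = 0 ∧ ∀ j ∈ T, f j x = 0) →
      ∃ p q, (∀ j ∈ T, f j p = 0) ∧ (∀ j ∈ T, f j q = 0) ∧ f g q < f g p)
    (S : Finset ι) : ∀ T : Finset ι, Disjoint S T →
      patternCount f S T = ∑ i ∈ range (d + 1 - #T), (#S).choose i := by
  induction S using Finset.induction_on with
  | empty =>
    intro T _
    have h : Realizable f ∅ T ∅ ↔ #T ≤ d := by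
      rw [← hne T]; simp [Realizable]
    simp only [patternCount, Finset.powerset_empty, Finset.sum_singleton, h, Finset.card_empty]
    split_ifs with hT
    · rw [show d + 1 - #T = (d - #T) + 1 by omega, Finset.sum_range_succ']
      simp
    · rw [show d + 1 - #T = 0 by omega]
      simp
  | insert g S hgS ih =>
    intro T hd
    rw [Finset.disjoint_insert_left] at hd
    rw [patternCount_insert hf hgS (hnc T g hd.1), ih T hd.2,
      ih (insert g T) (Finset.disjoint_insert_right.2 ⟨hgS, hd.2⟩),
      Finset.card_insert_of_notMem hgS, Finset.card_insert_of_notMem hd.1, sum_choose_succ]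
    rfl

/-! ### Components and sign patterns -/

/-- Components of the complement of the zero sets correspond to the realizable sign patterns. -/
lemma card_components_eq {E ι : Type*} [AddCommGroup E] [Module ℝ E] [TopologicalSpace E]
    [ContinuousAdd E] [ContinuousSMul ℝ E] [Fintype ι]
    {f : ι → E → ℝ} (hf : ∀ i, IsAff (f i)) (hc : ∀ i, Continuous (f i))
    {X : Set E} (hX : ∀ x, x ∈ X ↔ ∀ i, f i x ≠ 0) :
    Nat.card (ConnectedComponents X) = patternCount f univ ∅ := by
  classical
  let pat : X → Finset ι := fun x => univ.filter fun i => 0 < f i x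
  have hloc : IsLocallyConstant pat := by
    rw [IsLocallyConstant.iff_eventually_eq]
    intro x
    have : ∀ᶠ y : X in nhds x, ∀ i, (0 < f i y ↔ 0 < f i x) := by
      rw [Filter.eventually_all]
      intro i
      have ht : Filter.Tendsto (fun y : X => f i y) (nhds x) (nhds (f i x)) :=
        ((hc i).comp continuous_subtype_val).tendsto x
      rcases lt_or_gt_of_ne ((hX x).1 x.2 i) with h | h
      · filter_upwards [ht.eventually_lt_const h] with y hy
        exact ⟨fun h' => absurd h' hy.le.not_gt, fun h' => absurd h' h.le.not_gt⟩
      · filter_upwards [ht.eventually_const_lt h] with y hy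
        exact ⟨fun _ => h, fun _ => hy⟩
    filter_upwards [this] with y hy
    simp [pat, hy]
  have hfib : ∀ P, IsPreconnected (pat ⁻¹' {P}) := by
    intro P
    rw [← Topology.IsInducing.subtypeVal.isPreconnected_image]
    have himg : ((↑) : X → E) '' (pat ⁻¹' {P}) =
        {x | ∀ i, (i ∈ P → 0 < f i x) ∧ (i ∉ P → f i x < 0)} := by
      ext x
      simp only [Set.mem_image, Set.mem_preimage, Set.mem_singleton_iff, Set.mem_ofPred_eq]
      constructor
      · rintro ⟨y, rfl, rfl⟩ i
        simp only [pat, Finset.mem_filter, Finset.mem_univ, true_and, imp_self, not_lt]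
        exact fun h => lt_of_le_of_ne h ((hX y).1 y.2 i)
      · intro h
        refine ⟨⟨x, (hX x).2 fun i => ?_⟩, ?_, rfl⟩
        · by_cases hi : i ∈ P
          · exact ((h i).1 hi).ne'
          · exact ((h i).2 hi).ne
        · ext i
          simp only [pat, Finset.mem_filter, Finset.mem_univ, true_and]
          exact ⟨fun h' => by_contra fun hi => lt_asymm h' ((h i).2 hi), (h i).1⟩
    rw [himg]
    refine Convex.isPreconnected ?_
    intro x hx y hy s t hs ht hst i
    have e : s • x + t • y = x + t • (y - x) := by
      rw [show s = 1 - t by linarith, sub_smul, one_smul, smul_sub]; abel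
    have e2 : f i (s • x + t • y) = s * f i x + t * f i y := by
      rw [e, hf i, show s = 1 - t by linarith]; ring
    rw [e2]
    refine ⟨fun hP => ?_, fun hP => ?_⟩
    · have h1 := (hx i).1 hP
      have h2 := (hy i).1 hP
      rcases hs.eq_or_lt with rfl | hs
      · rw [show t = 1 by linarith]; linarith
      · linarith [mul_pos hs h1, mul_nonneg ht h2.le]
    · have h1 := (hx i).2 hP
      have h2 := (hy i).2 hP
      rcases hs.eq_or_lt with rfl | hs
      · rw [show t = 1 by linarith]; linarith
      · linarith [mul_neg_of_pos_of_neg hs h1, mul_nonpos_of_nonneg_of_nonpos ht h2.le]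
  have heq : ∀ x y : X, (x : ConnectedComponents X) = y ↔ pat x = pat y := by
    intro x y
    rw [ConnectedComponents.coe_eq_coe]
    constructor
    · intro h
      exact hloc.apply_eq_of_isPreconnected isPreconnected_connectedComponent
        mem_connectedComponent (h ▸ mem_connectedComponent)
    · intro h
      exact connectedComponent_eq
        ((hfib (pat x)).subset_connectedComponent (by simp) (by simp [h]))
  let F : ConnectedComponents X → Finset ι :=
    Quotient.lift pat fun x y h => (heq x y).1 (ConnectedComponents.coe_eq_coe.2 h)
  have hFinj : Function.Injective F := by
    intro u v
    obtain ⟨x, rfl⟩ := ConnectedComponents.surjective_coe u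
    obtain ⟨y, rfl⟩ := ConnectedComponents.surjective_coe v
    exact (heq x y).2
  have hrange : Set.range F = ((univ.powerset.filter fun P => Realizable f univ ∅ P :
      Finset (Finset ι)) : Set (Finset ι)) := by
    ext P
    simp only [Set.mem_range, Finset.coe_filter, Finset.mem_powerset, Finset.subset_univ, true_and,
      Set.mem_ofPred_eq]
    constructor
    · rintro ⟨u, rfl⟩
      obtain ⟨x, rfl⟩ := ConnectedComponents.surjective_coe u
      refine ⟨x, by simp, fun i _ hi => (Finset.mem_filter.1 hi).2, fun i _ hi => ?_⟩
      refine lt_of_le_of_ne (not_lt.1 fun h => hi ?_) ((hX x).1 x.2 i)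
      exact Finset.mem_filter.2 ⟨Finset.mem_univ i, h⟩
    · rintro ⟨x, -, h1, h2⟩
      have hx : x ∈ X := (hX x).2 fun i => by
        by_cases hi : i ∈ P
        · exact (h1 i (Finset.mem_univ i) hi).ne'
        · exact (h2 i (Finset.mem_univ i) hi).ne
      refine ⟨((⟨x, hx⟩ : X) : ConnectedComponents X), ?_⟩
      change pat ⟨x, hx⟩ = P
      ext i
      simp only [pat, Finset.mem_filter, Finset.mem_univ, true_and]
      exact ⟨fun h' => by_contra fun hi => lt_asymm h' (h2 i (Finset.mem_univ i) hi),
        h1 i (Finset.mem_univ i)⟩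
  rw [← Nat.card_range_of_injective hFinj, hrange, Nat.card_coe_set_eq, Set.ncard_coe_finset,
    Finset.card_filter]
  unfold patternCount
  refine Finset.sum_congr rfl fun P _ => ?_
  congr

end HyperplaneCount

/-! ### The arrangement -/


/-- Zaslavsky's count: for `k` distinct affine hyperplanes in general position in
`ℝ^d` (every `t ≤ d` of them intersect in an affine subspace of dimension exactly
`d - t`, and any more than `d` of them have empty intersection), the complement of
their union has exactly `∑_{i=0}^{d} C(k, i)` connected components. -/
theorem hyperplane_arrangement_general_position_count (d k : ℕ)
    (a : Fin k → (Fin d → ℝ)) (b : Fin k → ℝ) (ha : ∀ i, a i ≠ 0)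
    (H : Fin k → Set (Fin d → ℝ))
    (hH : ∀ i, H i = {x | ∑ s, a i s * x s = b i})
    (hdistinct : Function.Injective H)
    (hgen₁ : ∀ S : Finset (Fin k), S.card ≤ d →
      (⋂ i ∈ S, H i).Nonempty ∧
      ∃ A : AffineSubspace ℝ (Fin d → ℝ), (A : Set (Fin d → ℝ)) = ⋂ i ∈ S, H i ∧
        Module.finrank ℝ A.direction = d - S.card)
    (hgen₂ : ∀ S : Finset (Fin k), d < S.card → (⋂ i ∈ S, H i) = ∅) :
    Nat.card (ConnectedComponents ↥((⋃ i, H i)ᶜ)) =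
      ∑ i ∈ Finset.range (d + 1), Nat.choose k i := by
  classical
  let f : Fin k → (Fin d → ℝ) → ℝ := fun i x => ∑ s, a i s * x s - b i
  have hmem : ∀ i x, x ∈ H i ↔ f i x = 0 := fun i x => by
    simp [hH, f, sub_eq_zero]
  have hflat : ∀ (T : Finset (Fin k)) x, x ∈ ⋂ i ∈ T, H i ↔ ∀ j ∈ T, f j x = 0 := fun T x => by
    simp [hmem]
  have hf : ∀ i, HyperplaneCount.IsAff (f i) := by
    intro i x p q t
    simp only [f, Pi.add_apply, Pi.smul_apply, Pi.sub_apply, smul_eq_mul, mul_add, mul_sub,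
      Finset.sum_add_distrib, Finset.sum_sub_distrib, Finset.mul_sum]
    simp only [mul_left_comm]
    ring
  have hne : ∀ T : Finset (Fin k), (∃ x, ∀ j ∈ T, f j x = 0) ↔ T.card ≤ d := by
    intro T
    constructor
    · rintro ⟨x, hx⟩
      by_contra h
      have := (hflat T x).2 hx
      rw [hgen₂ T (not_le.1 h)] at this
      exact this
    · intro h
      obtain ⟨x, hx⟩ := (hgen₁ T h).1
      exact ⟨x, (hflat T x).1 hx⟩
  have hnc : ∀ (T : Finset (Fin k)) (g : Fin k), g ∉ T →
      (∃ x, f g x = 0 ∧ ∀ j ∈ T, f j x = 0) →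
      ∃ p q, (∀ j ∈ T, f j p = 0) ∧ (∀ j ∈ T, f j q = 0) ∧ f g q < f g p := by
    rintro T g hg ⟨x, hx, hxT⟩
    have hcard : (insert g T).card ≤ d :=
      (hne _).1 ⟨x, by simpa only [Finset.forall_mem_insert] using ⟨hx, hxT⟩⟩
    obtain ⟨-, A, hA, hAd⟩ := hgen₁ _ hcard
    rw [Finset.card_insert_of_notMem hg] at hcard hAd
    obtain ⟨-, B, hB, hBd⟩ := hgen₁ T (by omega)
    -- the flats of `T` and of `insert g T` differ because their dimensions do
    have hy : ∃ y, (∀ j ∈ T, f j y = 0) ∧ f g y ≠ 0 := by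
      by_contra! hcon
      have : A = B := by
        apply SetLike.coe_injective
        rw [hA, hB]
        ext y
        rw [hflat, hflat, Finset.forall_mem_insert]
        exact ⟨fun h => h.2, fun h => ⟨hcon y h, h⟩⟩
      rw [this] at hAd
      omega
    obtain ⟨y, hyT, hy⟩ := hy
    rcases lt_or_gt_of_ne hy with h | h
    · exact ⟨x, y, hxT, hyT, by rw [hx]; exact h⟩
    · exact ⟨y, x, hyT, hxT, by rw [hx]; exact h⟩
  rw [HyperplaneCount.card_components_eq (f := f) hf (fun i => by fun_prop)
      (fun x => by simp [hmem]),
    HyperplaneCount.patternCount_eq hf d hne hnc Finset.univ ∅ (Finset.disjoint_empty_right _)]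
  simp
end

section
/- Let H_1, …, H_k be any k affine hyperplanes in ℝ^d (not necessarily distinct or in general position). Then the number of connected components of ℝ^d \ (H_1 ∪ ⋯ ∪ H_k) is at most ∑_{i=0}^{d} C(k, i), where C(k, i) denotes the binomial coefficient (taken to be 0 when i > k); that is, the general-position count is the maximum possible. -/
/-!
The open half-spaces `{x | b i < a i ⬝ᵥ x}` containing a point `x` off all the hyperplanes form a set
`posSide a b x` of indices. Two points with the same set are joined by a segment that avoids every
hyperplane, so the components are at most as numerous as the sets `posSide a b x`
(`mk_eq_of_posSide_eq`).

The sets are counted by the Sauer–Shelah lemma: it suffices that they shatter no set `s` of more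
than `d` indices (`card_le_of_shatters`). For such an `s` there is a nontrivial relation
`∑ i ∈ s, c i • a i = 0`. If `s` were shattered, some `x` would satisfy `0 < c i * (a i ⬝ᵥ x - b i)`
for every `i ∈ s` with `c i ≠ 0`; summing, `∑ i ∈ s, c i * b i < 0`. The same applies
to `-c`, which is a contradiction.
-/

/-- The indices `i` such that `x` lies strictly on the positive side of the hyperplane
`a i ⬝ᵥ y = b i`. -/
noncomputable def posSide {d k : ℕ} (a : Fin k → (Fin d → ℝ)) (b : Fin k → ℝ) (x : Fin d → ℝ) :
    Finset (Fin k) :=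
  {i | b i < a i ⬝ᵥ x}

/-- The sign patterns, encoded as sets of indices, of the points lying on no hyperplane. -/
noncomputable def signFamily {d k : ℕ} (a : Fin k → (Fin d → ℝ)) (b : Fin k → ℝ) :
    Finset (Finset (Fin k)) :=
  open Classical in
  {u | ∃ x, (∀ i, a i ⬝ᵥ x ≠ b i) ∧ posSide a b x = u}

/-- Shattering gives a point `x` at which `a i ⬝ᵥ x - b i` has the sign of `c i` whenever `i ∈ s` and
`c i ≠ 0`; evaluating the
relation `∑ i ∈ s, c i • a i = 0` at `x` gives the sign of `∑ i ∈ s, c i * b i`. -/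
theorem sum_mul_neg_of_shatters {d k : ℕ} {a : Fin k → (Fin d → ℝ)} {b : Fin k → ℝ}
    {s : Finset (Fin k)} (hs : (signFamily a b).Shatters s) {c : Fin k → ℝ}
    (hc : ∑ i ∈ s, c i • a i = 0) (hne : ∃ i ∈ s, c i ≠ 0) : ∑ i ∈ s, c i * b i < 0 := by
  obtain ⟨u, hu, hsu⟩ := hs (s.filter_subset fun i => 0 < c i)
  simp only [signFamily, Finset.mem_filter, Finset.mem_univ, true_and] at hu
  obtain ⟨x, hx, rfl⟩ := hu
  have hsign : ∀ i ∈ s, (b i < a i ⬝ᵥ x ↔ 0 < c i) := by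
    intro i hi
    have := congrArg (i ∈ ·) hsu
    simpa [posSide, hi] using this
  have hpos : ∀ i ∈ s, c i ≠ 0 → 0 < c i * (a i ⬝ᵥ x - b i) := by
    intro i hi hci
    rcases hci.lt_or_gt with h | h
    · have h1 : ¬ b i < a i ⬝ᵥ x := fun h' => absurd ((hsign i hi).1 h') h.not_gt
      have h2 : a i ⬝ᵥ x < b i := lt_of_le_of_ne (not_lt.1 h1) (hx i)
      exact mul_pos_of_neg_of_neg h (sub_neg.2 h2)
    · exact mul_pos h (sub_pos.2 ((hsign i hi).2 h))
  have hsum : 0 < ∑ i ∈ s, c i * (a i ⬝ᵥ x - b i) := by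
    refine Finset.sum_pos' (fun i hi => ?_) ?_
    · by_cases h : c i = 0
      · simp [h]
      · exact (hpos i hi h).le
    · obtain ⟨i, hi, h⟩ := hne
      exact ⟨i, hi, hpos i hi h⟩
  have hzero : ∑ i ∈ s, c i * (a i ⬝ᵥ x) = 0 := by
    have := congrArg (· ⬝ᵥ x) hc
    simpa [sum_dotProduct] using this
  simp only [mul_sub, Finset.sum_sub_distrib, hzero] at hsum
  linarith

theorem card_le_of_shatters {d k : ℕ} {a : Fin k → (Fin d → ℝ)} {b : Fin k → ℝ}
    {s : Finset (Fin k)} (hs : (signFamily a b).Shatters s) : s.card ≤ d := by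
  by_contra! hcard
  have hdep : ¬ LinearIndepOn ℝ a (s : Set (Fin k)) := by
    intro h
    have := LinearIndependent.fintype_card_le_finrank h
    simp at this
    omega
  rw [linearIndepOn_finset_iff] at hdep
  push Not at hdep
  obtain ⟨c, hc, hne⟩ := hdep
  have h1 := sum_mul_neg_of_shatters hs hc hne
  have h2 := sum_mul_neg_of_shatters hs (c := -c) (by simp [hc]) (by simpa using hne)
  simp only [Pi.neg_apply, neg_mul, Finset.sum_neg_distrib] at h2
  linarith

theorem card_signFamily_le {d k : ℕ} (a : Fin k → (Fin d → ℝ)) (b : Fin k → ℝ) :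
    (signFamily a b).card ≤ ∑ i ∈ Finset.range (d + 1), Nat.choose k i := by
  refine (Finset.card_le_card_shatterer _).trans (Finset.card_shatterer_le_sum_vcDim.trans ?_)
  rw [Fintype.card_fin]
  refine Finset.sum_le_sum_of_subset fun n hn => ?_
  have hvc : (signFamily a b).vcDim ≤ d :=
    Finset.sup_le fun s hs => card_le_of_shatters (Finset.mem_shatterer.1 hs)
  rw [Finset.mem_Iic] at hn
  rw [Finset.mem_range]
  omega

/-- Points with the same sign pattern lie in a common component: the segment between them stays
in the complement of the hyperplanes. -/
theorem mk_eq_of_posSide_eq {d k : ℕ} {a : Fin k → (Fin d → ℝ)} {b : Fin k → ℝ}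
    {S : Set (Fin d → ℝ)} (hS : ∀ x, x ∈ S ↔ ∀ i, a i ⬝ᵥ x ≠ b i) {x y : S}
    (h : posSide a b x = posSide a b y) :
    (x : ConnectedComponents S) = (y : ConnectedComponents S) := by
  have hseg : segment ℝ (x : Fin d → ℝ) y ⊆ S := by
    rintro z ⟨p, q, hp, hq, hpq, rfl⟩
    rw [hS]
    intro i
    have hi : b i < a i ⬝ᵥ (x : Fin d → ℝ) ↔ b i < a i ⬝ᵥ (y : Fin d → ℝ) := by
      have := congrArg (i ∈ ·) h
      simpa [posSide] using this
    have hx := (hS x).1 x.2 i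
    have hy := (hS y).1 y.2 i
    simp only [dotProduct_add, dotProduct_smul, smul_eq_mul]
    rcases hx.lt_or_gt with h1 | h1
    · have h2 : a i ⬝ᵥ (y : Fin d → ℝ) < b i :=
        lt_of_le_of_ne (not_lt.1 fun h' => h1.not_gt (hi.2 h')) hy
      exact (convex_Iio (b i) h1 h2 hp hq hpq).ne
    · exact (convex_Ioi (b i) h1 (hi.1 h1) hp hq hpq).ne'
  have hconn : IsPreconnected (Subtype.val ⁻¹' segment ℝ (x : Fin d → ℝ) y : Set S) := by
    rw [← Topology.IsInducing.subtypeVal.isPreconnected_image, Subtype.image_preimage_coe,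
      Set.inter_eq_right.2 hseg]
    exact (convex_segment _ _).isPreconnected
  rw [ConnectedComponents.coe_eq_coe']
  exact hconn.subset_connectedComponent (right_mem_segment ℝ _ _) (left_mem_segment ℝ _ _)

/-- For any `k` affine hyperplanes in `ℝ^d` (not necessarily distinct or in general
position), the complement of their union has at most `∑_{i=0}^{d} C(k, i)` connected
components. -/
theorem hyperplane_arrangement_count_le (d k : ℕ)
    (a : Fin k → (Fin d → ℝ)) (b : Fin k → ℝ) (ha : ∀ i, a i ≠ 0)
    (H : Fin k → Set (Fin d → ℝ))
    (hH : ∀ i, H i = {x | ∑ s, a i s * x s = b i}) :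
    Nat.card (ConnectedComponents ↥((⋃ i, H i)ᶜ)) ≤
      ∑ i ∈ Finset.range (d + 1), Nat.choose k i := by
  have hS : ∀ x, x ∈ (⋃ i, H i)ᶜ ↔ ∀ i, a i ⬝ᵥ x ≠ b i := by
    intro x
    simp [hH, dotProduct]
  let f : ConnectedComponents ↥((⋃ i, H i)ᶜ) → signFamily a b := fun C =>
    ⟨posSide a b (Quotient.out C).1, by
      simp only [signFamily, Finset.mem_filter, Finset.mem_univ, true_and]
      exact ⟨_, (hS _).1 (Quotient.out C).2, rfl⟩⟩
  have hf : Function.Injective f := by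
    intro C D hCD
    have h := mk_eq_of_posSide_eq hS (congrArg Subtype.val hCD)
    exact (Quotient.out_eq C).symm.trans (h.trans (Quotient.out_eq D))
  calc Nat.card (ConnectedComponents ↥((⋃ i, H i)ᶜ))
      ≤ Nat.card (signFamily a b) := Nat.card_le_card_of_injective f hf
    _ = (signFamily a b).card := by simp
    _ ≤ _ := card_signFamily_le a b
end

section
/- Soundness of equilibrium recovery: Consider a second-price pacing game with n buyers, m goods, valuations v, and budgets B, and let λ ∈ ℝ^m with λ_j > 0 for all j. Define α_i = min({1} ∪ {λ_j / v_{ij} : j ∈ [m] with v_{ij} > 0}) for each buyer i, let T_j = {i ∈ [n] : α_i v_{ij} = λ_j}, and let p_j be the second-highest element of the list (α_1 v_{1j}, …, α_n v_{nj}). Suppose: (i) T_j ≠ ∅ for every good j; (ii) there exist payments y_{ij} ≥ 0 with y_{ij} = 0 whenever i ∉ T_j, ∑_{i∈T_j} y_{ij} = p_j for every j, ∑_{j∈[m]} y_{ij} ≤ B_i for every i, and ∑_{j∈[m]} y_{ij} = B_i whenever α_i < 1. Define x_{ij} = y_{ij}/p_j for i ∈ T_j when p_j > 0; x_{ij} =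 1/|T_j| for i ∈ T_j when p_j = 0; and x_{ij} = 0 for i ∉ T_j. Then (α, x) is a second-price pacing equilibrium, and moreover h_j(α) = λ_j and p_j(α) = p_j for every good j. -/
open scoped Classical in
/-- Soundness of equilibrium recovery from a highest-bid vector `λ`: if `λ_j > 0` for
all goods, `α` is recovered by the minimum formula, every tie set `T j` is nonempty,
and there are payments `y` supported on the tie sets that clear each good's second
price and respect budgets (with exhaustion for paced buyers), then the recovered pair
`(α, x)` is an SPPE whose highest and second-highest bids are exactly `λ` and `p`. -/
theorem sppe_recovery_sound (n m : ℕ) [NeZero n] (v : Fin n → Fin m → ℝ)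
    (B : Fin n → ℝ) (hv : ∀ i j, 0 ≤ v i j) (hB : ∀ i, 0 < B i)
    (lam : Fin m → ℝ) (hlam : ∀ j, 0 < lam j)
    (α : Fin n → ℝ)
    (hα : ∀ i, α i = (insert (1:ℝ)
      ((Finset.univ.filter (fun j : Fin m => 0 < v i j)).image
        (fun j => lam j / v i j))).inf' (Finset.insert_nonempty _ _) id)
    (T : Fin m → Finset (Fin n))
    (hT : ∀ j, T j = Finset.univ.filter (fun i => α i * v i j = lam j))
    (p : Fin m → ℝ) (hp : ∀ j, p j = pBid v α j)
    (hTne : ∀ j, (T j).Nonempty)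
    (y : Fin n → Fin m → ℝ)
    (hy0 : ∀ i j, 0 ≤ y i j)
    (hysupp : ∀ i j, i ∉ T j → y i j = 0)
    (hyclear : ∀ j, ∑ i ∈ T j, y i j = p j)
    (hybudget : ∀ i, ∑ j, y i j ≤ B i)
    (hypaced : ∀ i, α i < 1 → ∑ j, y i j = B i)
    (x : Fin n → Fin m → ℝ)
    (hx : ∀ i j, x i j =
      if i ∈ T j then (if 0 < p j then y i j / p j else 1 / ((T j).card : ℝ)) else 0) :
    IsSPPE v B α x ∧ ∀ j, hBid v α j = lam j ∧ pBid v α j = p j := by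
  have hαle : ∀ i, α i ≤ 1 := fun i => by
    rw [hα i]
    exact Finset.inf'_le id (Finset.mem_insert_self _ _)
  have hαnn : ∀ i, 0 ≤ α i := fun i => by
    rw [hα i]
    refine Finset.le_inf' _ _ fun b hb => ?_
    rcases Finset.mem_insert.1 hb with rfl | hb
    · exact zero_le_one
    · obtain ⟨j, -, rfl⟩ := Finset.mem_image.1 hb
      exact div_nonneg (hlam j).le (hv i j)
  have hbid : ∀ i j, α i * v i j ≤ lam j := fun i j => by
    rcases (hv i j).eq_or_lt with h | h
    · rw [← h, mul_zero]
      exact (hlam j).le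
    · rw [← le_div_iff₀ h, hα i]
      exact Finset.inf'_le id (Finset.mem_insert_of_mem (Finset.mem_image.2
        ⟨j, Finset.mem_filter.2 ⟨Finset.mem_univ _, h⟩, rfl⟩))
  have hmemT : ∀ i j, i ∈ T j ↔ α i * v i j = lam j := fun i j => by simp [hT]
  have hh : ∀ j, hBid v α j = lam j := fun j => by
    refine le_antisymm (Finset.sup'_le _ _ fun i _ => hbid i j) ?_
    obtain ⟨i, hi⟩ := hTne j
    rw [← (hmemT i j).1 hi]
    exact Finset.le_sup' (fun i => α i * v i j) (Finset.mem_univ i)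
  have hpnn : ∀ j, 0 ≤ p j := fun j => by
    rw [← hyclear j]
    exact Finset.sum_nonneg fun i _ => hy0 i j
  have hxnn : ∀ i j, 0 ≤ x i j := fun i j => by
    rw [hx]
    split_ifs
    · exact div_nonneg (hy0 i j) (hpnn j)
    · positivity
    · exact le_rfl
  have hsum : ∀ j, ∑ i, x i j = 1 := fun j => by
    simp only [hx]
    rw [← Finset.sum_filter, Finset.filter_mem_eq_inter, Finset.univ_inter]
    split_ifs with h
    · rw [← Finset.sum_div, hyclear j, div_self h.ne']
    · have hc : ((T j).card : ℝ) ≠ 0 := Nat.cast_ne_zero.2 (hTne j).card_pos.ne'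
      rw [Finset.sum_const, nsmul_eq_mul, mul_one_div, div_self hc]
  have hpay : ∀ i j, x i j * pBid v α j = y i j := fun i j => by
    rw [← hp, hx]
    split_ifs with hi h
    · exact div_mul_cancel₀ _ h.ne'
    · have hp0 : p j = 0 := le_antisymm (not_lt.1 h) (hpnn j)
      -- At price zero the nonnegative payments sum to zero, so each of them vanishes.
      have hs := hyclear j
      rw [hp0, Finset.sum_eq_zero_iff_of_nonneg fun i _ => hy0 i j] at hs
      rw [hp0, mul_zero, hs i hi]
    · rw [zero_mul, hysupp i j hi]
  refine ⟨⟨fun i => ⟨hαnn i, hαle i⟩, fun i j => ⟨hxnn i j, ?_⟩, fun j => (hsum j).le,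
    fun i j hpos => ?_, fun j _ => hsum j, fun i => ?_, fun i hlt => ?_⟩,
    fun j => ⟨hh j, (hp j).symm⟩⟩
  · rw [← hsum j]
    exact Finset.single_le_sum (f := fun i => x i j) (fun i _ => hxnn i j) (Finset.mem_univ i)
  · rw [hh, ← hmemT]
    by_contra hi
    rw [hx, if_neg hi] at hpos
    exact hpos.false
  · simpa only [hpay] using hybudget i
  · simp only [hpay] at hlt
    by_contra hne
    exact hlt.ne (hypaced i (lt_of_le_of_ne (hαle i) hne))
end
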